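/- arXiv:1411.4196 — 2 statements merged into one kernel-verified Lean document; each statement's English description precedes it below -/
import Mathlib

section
/- For all integers r ≥ 2 and ℓ ≥ 1 and every real γ > 0, there is a δ₁ = δ₁(r, ℓ, γ) > 0 such that for all sufficiently large n the following holds: every graph G on n vertices containing at least γ·binom(n,r) copies of K_r contains at least δ₁·binom(n, rℓ) copies of K_r(ℓ). -/
open SimpleGraph

/-- `copyCount G H` is the number of copies of `H` in `G`, i.e. the number of subgraphs of
`G` isomorphic to `H`. -/
noncomputable def copyCount {V W : Type*} (G : SimpleGraph V) (H : SimpleGraph W) : ℕ :=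
  Nat.card {G' : G.Subgraph // Nonempty (G'.coe ≃g H)}

lemma aux_pow {A V : Type} [Finite A] [Finite V] (k : ℕ) (ε : ℝ) (hε : 0 < ε)
    (P : A → V → Prop)
    (h : ε * (Nat.card A * Nat.card V) ≤ (Nat.card {p : A × V // P p.1 p.2} : ℝ)) :
    ε ^ (k + 1) * (Nat.card A * (Nat.card V) ^ (k + 1)) ≤
      (Nat.card {p : A × (Fin (k + 1) → V) // ∀ j, P p.1 (p.2 j)} : ℝ) := by
  classical
  have := Fintype.ofFinite A
  have e1 : Nat.card {p : A × V // P p.1 p.2} = ∑ a : A, Nat.card {v : V // P a v} := by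
    rw [← Nat.card_sigma]
    exact Nat.card_congr
      { toFun := fun p => ⟨p.1.1, p.1.2, p.2⟩
        invFun := fun p => ⟨(p.1, p.2.1), p.2.2⟩
        left_inv := fun _ => rfl
        right_inv := fun _ => rfl }
  have e2 : Nat.card {p : A × (Fin (k + 1) → V) // ∀ j, P p.1 (p.2 j)}
      = ∑ a : A, (Nat.card {v : V // P a v}) ^ (k + 1) := by
    have : ∀ a : A, (Nat.card {v : V // P a v}) ^ (k + 1)
        = Nat.card (Fin (k + 1) → {v : V // P a v}) := by
      intro a
      rw [Nat.card_fun]; simp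
    simp_rw [this]
    rw [← Nat.card_sigma]
    exact Nat.card_congr
      { toFun := fun p => ⟨p.1.1, fun j => ⟨p.1.2 j, p.2 j⟩⟩
        invFun := fun p => ⟨(p.1, fun j => (p.2 j).1), fun j => (p.2 j).2⟩
        left_inv := fun _ => rfl
        right_inv := fun _ => rfl }
  rw [e1] at h
  rw [e2]
  push_cast at h ⊢
  have h3 := pow_sum_div_card_le_sum_pow (s := (Finset.univ : Finset A))
    (f := fun a => (Nat.card {v : V // P a v} : ℝ)) (fun _ _ => by positivity) k
  refine le_trans ?_ h3
  have hc : (Finset.univ : Finset A).card = Nat.card A := by simp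
  rw [hc]
  rcases Nat.eq_zero_or_pos (Nat.card A) with h0 | h0
  · rw [h0]
    have : 0 ≤ (∑ a : A, (Nat.card {v : V // P a v} : ℝ)) ^ (k+1) := by positivity
    simp only [Nat.cast_zero, zero_mul, mul_zero]
    positivity
  · have h0' : (0:ℝ) < Nat.card A := by exact_mod_cast h0
    rw [le_div_iff₀ (by positivity)]
    calc _ = (ε * (Nat.card A * Nat.card V)) ^ (k + 1) := by ring
      _ ≤ _ := by gcongr

lemma aux_blow (k : ℕ) (r : ℕ) : ∀ ε : ℝ, 0 < ε → ∃ δ : ℝ, 0 < δ ∧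
    ∀ (A V : Type) [Finite A] [Finite V] (P : A → (Fin r → V) → Prop),
    ε * (Nat.card A * (Nat.card V) ^ r) ≤
      (Nat.card {p : A × (Fin r → V) // P p.1 p.2} : ℝ) →
    δ * (Nat.card A * (Nat.card V) ^ (r * (k + 1))) ≤
      (Nat.card {p : A × (Fin r → Fin (k + 1) → V) //
        ∀ s : Fin r → Fin (k + 1), P p.1 (fun i => p.2 i (s i))} : ℝ) := by
  induction r with
  | zero =>
    intro ε hε
    refine ⟨ε, hε, fun A V _ _ P h => ?_⟩
    simp only [pow_zero, zero_mul] at h ⊢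
    refine h.trans ?_
    norm_cast
    refine Nat.card_le_card_of_injective
      (fun p => ⟨(p.1.1, fun i => i.elim0), fun s => ?_⟩) ?_
    · have := p.2
      convert this
    · rintro ⟨⟨a, x⟩, hp⟩ ⟨⟨b, y⟩, hq⟩ h
      simp only [Subtype.mk.injEq, Prod.mk.injEq] at h ⊢
      exact ⟨h.1, Subsingleton.elim _ _⟩
  | succ r ih =>
    intro ε hε
    obtain ⟨δ, hδ, H⟩ := ih (ε ^ (k + 1)) (by positivity)
    refine ⟨δ, hδ, fun A V _ _ P h => ?_⟩
    have h1 := aux_pow (A := A × (Fin r → V)) (V := V) k ε hε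
      (fun q v => P q.1 (Fin.cons v q.2)) (by
        have e : Nat.card {p : (A × (Fin r → V)) × V // P p.1.1 (Fin.cons p.2 p.1.2)}
            = Nat.card {p : A × (Fin (r + 1) → V) // P p.1 p.2} :=
          Nat.card_congr
            { toFun := fun p => ⟨(p.1.1.1, Fin.cons p.1.2 p.1.1.2), p.2⟩
              invFun := fun p => ⟨((p.1.1, Fin.tail p.1.2), p.1.2 0), by
                simpa using p.2⟩
              left_inv := fun p => by simp
              right_inv := fun p => by simp }
        rw [e]
        refine le_of_eq_of_le ?_ h
        rw [Nat.card_prod, Nat.card_fun]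
        simp only [Nat.card_eq_fintype_card (α := Fin _), Fintype.card_fin, Nat.cast_mul, Nat.cast_pow]
        ring)
    have h2 := H (A × (Fin (k + 1) → V)) V
      (fun q x => ∀ j, P q.1 (Fin.cons (q.2 j) x)) (by
        have e : Nat.card {p : (A × (Fin r → V)) × (Fin (k + 1) → V) //
              ∀ j, P p.1.1 (Fin.cons (p.2 j) p.1.2)}
            = Nat.card {p : (A × (Fin (k + 1) → V)) × (Fin r → V) //
              ∀ j, P p.1.1 (Fin.cons (p.1.2 j) p.2)} :=
          Nat.card_congr
            { toFun := fun p => ⟨((p.1.1.1, p.1.2), p.1.1.2), p.2⟩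
              invFun := fun p => ⟨((p.1.1.1, p.1.2), p.1.1.2), p.2⟩
              left_inv := fun p => rfl
              right_inv := fun p => rfl }
        rw [← e]
        refine le_of_eq_of_le ?_ h1
        rw [Nat.card_prod, Nat.card_fun, Nat.card_prod, Nat.card_fun]
        simp only [Nat.card_eq_fintype_card (α := Fin _), Fintype.card_fin, Nat.cast_mul, Nat.cast_pow]
        ring)
    have e3 : δ * (Nat.card A * (Nat.card V : ℝ) ^ ((r + 1) * (k + 1)))
        = δ * (Nat.card (A × (Fin (k + 1) → V)) * (Nat.card V : ℝ) ^ (r * (k + 1))) := by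
      rw [Nat.card_prod, Nat.card_fun]
      simp only [Nat.card_eq_fintype_card (α := Fin _), Fintype.card_fin, Nat.cast_mul, Nat.cast_pow]
      ring
    rw [e3]
    refine h2.trans ?_
    norm_cast
    refine Nat.card_le_card_of_injective
      (fun p => ⟨(p.1.1.1, Fin.cons p.1.1.2 p.1.2), fun s => ?_⟩) ?_
    · have := p.2 (fun i => s i.succ) (s 0)
      convert this using 1
      funext i
      refine Fin.cases ?_ (fun i => ?_) i <;> simp
    · rintro ⟨⟨⟨a, v⟩, x⟩, hp⟩ ⟨⟨⟨b, w⟩, y⟩, hq⟩ h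
      simp only [Subtype.mk.injEq, Prod.mk.injEq, Fin.cons_inj] at h ⊢
      tauto

lemma aux_copyCount_eq {V W : Type} [Fintype V] (G : SimpleGraph V) (H : SimpleGraph W) :
    _root_.copyCount G H = SimpleGraph.copyCount G H := by
  classical
  rw [_root_.copyCount, SimpleGraph.copyCount, Nat.card_eq_fintype_card, Fintype.card_subtype]
  congr 1
  ext G'
  simp only [Finset.mem_filter, Finset.mem_univ, true_and]
  exact ⟨fun ⟨f⟩ => ⟨f.symm⟩, fun ⟨f⟩ => ⟨f.symm⟩⟩

lemma aux_labelled_le {V W : Type} [Fintype V] [Fintype W] (G : SimpleGraph V)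
    (H : SimpleGraph W) :
    G.labelledCopyCount H ≤ (Fintype.card W) ^ (Fintype.card W) * _root_.copyCount G H := by
  classical
  rw [aux_copyCount_eq, copyCount_eq_card_image_copyToSubgraph, labelledCopyCount]
  refine Finset.card_le_mul_card_image _ _ fun G' hG' => ?_
  obtain ⟨f₀, -, rfl⟩ := Finset.mem_image.1 hG'
  have key : ∀ f : H.Copy G, f.toSubgraph = f₀.toSubgraph → ∀ w, ∃ w', f₀ w' = f w := by
    intro f hf w
    have : f w ∈ f.toSubgraph.verts := by simp
    rw [hf] at this
    simpa using this
  calc _ ≤ (Finset.univ : Finset (W → W)).card := by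
        refine Finset.card_le_card_of_injOn
          (fun f => if hf : f.toSubgraph = f₀.toSubgraph then
            fun w => (key f hf w).choose else id) (fun _ _ => Finset.mem_coe.2 (Finset.mem_univ _)) ?_
        intro f hf g hg hfg
        simp only [Finset.coe_filter, Finset.mem_univ, true_and, Set.mem_ofPred_eq] at hf hg
        simp only [hf, hg, dite_true] at hfg
        ext w
        rw [← (key f hf w).choose_spec, ← (key g hg w).choose_spec]
        exact congrArg f₀ (congrFun hfg w)
    _ = _ := by simp

lemma aux_desc (m : ℕ) (c : ℝ) (hc : c < 1) : ∃ n₀ : ℕ, ∀ n ≥ n₀,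
    c * (n : ℝ) ^ m ≤ (n.descFactorial m : ℝ) := by
  have h := (isEquivalent_descFactorial m).isLittleO
  have h2 := h.def (sub_pos.2 hc)
  obtain ⟨n₀, hn⟩ := Filter.eventually_atTop.1 h2
  refine ⟨n₀, fun n hn' => ?_⟩
  have := hn n hn'
  simp only [Pi.sub_apply, Real.norm_eq_abs] at this
  rw [abs_of_nonneg (by positivity : (0:ℝ) ≤ (n:ℝ)^m)] at this
  have := neg_abs_le ((n.descFactorial m : ℝ) - (n:ℝ)^m)
  linarith

lemma aux_labelled_eq {V W : Type} [Fintype V] [Fintype W] (G : SimpleGraph V)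
    (H : SimpleGraph W) : G.labelledCopyCount H = Nat.card (H.Copy G) := by
  classical
  rw [labelledCopyCount]
  exact (@Nat.card_eq_fintype_card _ (_)).symm

/-- Homomorphisms are at most injective ones plus non-injective maps. -/
lemma aux_hom_le {W : Type} [Fintype W] (n : ℕ) (G : SimpleGraph (Fin n))
    (H : SimpleGraph W) :
    Nat.card (H →g G) + n.descFactorial (Fintype.card W) ≤
      G.labelledCopyCount H + n ^ (Fintype.card W) := by
  classical
  have hd : n.descFactorial (Fintype.card W) = Nat.card (W ↪ Fin n) := by
    rw [Nat.card_eq_fintype_card, Fintype.card_embedding_eq]; simp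
  have hp : n ^ (Fintype.card W) = Nat.card (W → Fin n) := by
    rw [Nat.card_fun]; simp
  have hl : G.labelledCopyCount H = Nat.card (H.Copy G) := aux_labelled_eq G H
  have : Finite (H →g G) := Finite.of_injective _ DFunLike.coe_injective
  have : Finite (H.Copy G) := Finite.of_injective _ DFunLike.coe_injective
  rw [hd, hp, hl, ← Nat.card_sum, ← Nat.card_sum]
  refine Nat.card_le_card_of_injective
    (Sum.elim (fun f => if hf : Function.Injective f then Sum.inl (f.toCopy hf) else Sum.inr f)
      (fun e => Sum.inr e)) ?_
  rintro (f | f) (g | g) h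
  · simp only [Sum.elim_inl] at h
    split_ifs at h with h1 h2 h2
    · simp at h; simp [h]
    · simp only [Sum.inr.injEq] at h
      rw [DFunLike.coe_injective h]
  · simp only [Sum.elim_inl, Sum.elim_inr] at h
    split_ifs at h with h1
    simp only [Sum.inr.injEq] at h
    exact absurd (h ▸ g.injective) h1
  · simp only [Sum.elim_inl, Sum.elim_inr] at h
    split_ifs at h with h1
    simp only [Sum.inr.injEq] at h
    exact absurd (h ▸ f.injective) h1
  · simp only [Sum.elim_inr, Sum.inr.injEq] at h
    rw [DFunLike.coe_injective h]

theorem stmt11 (r ℓ : ℕ) (hr : 2 ≤ r) (hℓ : 1 ≤ ℓ) (γ : ℝ) (hγ : 0 < γ) :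
    ∃ δ₁ : ℝ, 0 < δ₁ ∧ ∃ n₀ : ℕ, ∀ n ≥ n₀, ∀ G : SimpleGraph (Fin n),
      γ * (n.choose r : ℝ) ≤ (_root_.copyCount G (completeGraph (Fin r)) : ℝ) →
      δ₁ * (n.choose (r * ℓ) : ℝ) ≤
        (_root_.copyCount G (completeMultipartiteGraph (fun _ : Fin r => Fin ℓ)) : ℝ) := by
  classical
  obtain ⟨k, rfl⟩ : ∃ k, ℓ = k + 1 := ⟨ℓ - 1, by omega⟩
  obtain ⟨δ, hδ, H⟩ := aux_blow k r (γ * (1 / 2) / r.factorial) (by positivity)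
  set m := r * (k + 1) with hm
  obtain ⟨n₁, hn₁⟩ := aux_desc r (1 / 2) (by norm_num)
  obtain ⟨n₂, hn₂⟩ := aux_desc m (1 - δ / 2) (by linarith)
  have hmpos : 0 < m := by positivity
  refine ⟨δ / 2 / (m : ℝ) ^ m, by positivity, max n₁ n₂, fun n hn G hG => ?_⟩
  have hd1 := hn₁ n (le_trans (le_max_left _ _) hn)
  have hd2 := hn₂ n (le_trans (le_max_right _ _) hn)
  have h1 := H Unit (Fin n) (fun _ x => ∀ i j, i ≠ j → G.Adj (x i) (x j)) (by
    have a1 : (_root_.copyCount G (completeGraph (Fin r)) : ℝ) ≤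
        Nat.card {p : Unit × (Fin r → Fin n) // ∀ i j, i ≠ j → G.Adj (p.2 i) (p.2 j)} := by
      rw [aux_copyCount_eq]
      norm_cast
      refine copyCount_le_labelledCopyCount.trans ?_
      rw [aux_labelled_eq]
      refine Nat.card_le_card_of_injective
        (fun f => ⟨((), f), fun i j hij => f.toHom.map_adj (by simpa using hij)⟩) ?_
      intro f g h
      simp only [Subtype.mk.injEq, Prod.mk.injEq, true_and] at h
      exact DFunLike.coe_injective h
    refine le_trans ?_ (hG.trans a1)
    rw [Nat.descFactorial_eq_factorial_mul_choose] at hd1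
    push_cast at hd1
    have hf : (0:ℝ) < r.factorial := by positivity
    simp only [Nat.card_unique, Nat.cast_one, one_mul, Nat.card_eq_fintype_card, Fintype.card_fin]
    calc _ = γ * (1 / 2 * (n:ℝ) ^ r / r.factorial) := by ring
      _ ≤ _ := by
        gcongr
        rw [div_le_iff₀ hf]
        linarith)
  have h2 : (Nat.card {p : Unit × (Fin r → Fin (k + 1) → Fin n) //
        ∀ s : Fin r → Fin (k + 1), ∀ i j, i ≠ j → G.Adj (p.2 i (s i)) (p.2 j (s j))} : ℝ)
      ≤ Nat.card (completeMultipartiteGraph (fun _ : Fin r => Fin (k + 1)) →g G) := by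
    norm_cast
    have : Finite (completeMultipartiteGraph (fun _ : Fin r => Fin (k + 1)) →g G) :=
      Finite.of_injective _ DFunLike.coe_injective
    refine Nat.card_le_card_of_injective
      (fun p => ⟨fun w => p.1.2 w.1 w.2, fun {a b} hab => ?_⟩) ?_
    · have hab' : a.1 ≠ b.1 := hab
      have := p.2 (fun i => if i = a.1 then a.2 else b.2) a.1 b.1 hab'
      simpa [hab'.symm] using this
    · rintro ⟨⟨a, x⟩, hp⟩ ⟨⟨b, y⟩, hq⟩ h
      simp only [Subtype.mk.injEq, Prod.mk.injEq] at h ⊢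
      refine ⟨trivial, ?_⟩
      funext i j
      exact congrFun (congrArg (fun f => f.toFun) h) ⟨i, j⟩
  have h3 := aux_hom_le n G (completeMultipartiteGraph (fun _ : Fin r => Fin (k + 1)))
  have h4 := aux_labelled_le G (completeMultipartiteGraph (fun _ : Fin r => Fin (k + 1)))
  have hW : Fintype.card ((_ : Fin r) × Fin (k + 1)) = m := by simp [hm]
  rw [hW] at h3 h4
  have h3' : (Nat.card (completeMultipartiteGraph (fun _ : Fin r => Fin (k + 1)) →g G) : ℝ)
      + n.descFactorial m ≤ G.labelledCopyCount
        (completeMultipartiteGraph (fun _ : Fin r => Fin (k + 1))) + (n : ℝ) ^ m := by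
    exact_mod_cast h3
  have h4' : (G.labelledCopyCount
        (completeMultipartiteGraph (fun _ : Fin r => Fin (k + 1))) : ℝ) ≤ (m : ℝ) ^ m *
      _root_.copyCount G (completeMultipartiteGraph (fun _ : Fin r => Fin (k + 1))) := by
    exact_mod_cast h4
  simp only [Nat.card_unique, Nat.cast_one, one_mul, Nat.card_eq_fintype_card (α := Fin n),
    Fintype.card_fin] at h1
  have h5 : (n.choose m : ℝ) ≤ (n : ℝ) ^ m := by exact_mod_cast Nat.choose_le_pow n m
  have h6 : δ / 2 * (n.choose m : ℝ) ≤ δ / 2 * (n : ℝ) ^ m := by gcongr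
  have hmm : (0:ℝ) < (m : ℝ) ^ m := by positivity
  rw [div_mul_eq_mul_div, div_le_iff₀ hmm]
  have h7 := h1.trans h2
  linarith
end

section
/- Let n and s be integers satisfying n/3 < s ≤ n/2. Then for every integer t with n−s ≤ t ≤ n, one has 2^{n−t} + Σ_{j=0}^{s} binom(t,j) ≥ 2^{s} + Σ_{j=0}^{s} binom(n−s, j); that is, the quantity 2^{n−t} + Σ_{j≤s} binom(t,j) is minimised over n−s ≤ t ≤ n at t = n−s. -/
open Finset

theorem aux_pascal (t s : ℕ) : ∑ j ∈ Finset.range (s + 1), (t + 1).choose j =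
    ∑ j ∈ Finset.range (s + 1), t.choose j + ∑ j ∈ Finset.range s, t.choose j := by
  rw [Finset.sum_range_succ', Finset.sum_range_succ' (fun j => t.choose j)]
  simp only [Nat.choose_succ_succ, Finset.sum_add_distrib, Nat.choose_zero_right]
  simp only [Nat.succ_eq_add_one]
  ring

theorem aux_lower (t k : ℕ) (h : k ≤ t) :
    2 ^ k ≤ ∑ j ∈ Finset.range (k + 1), t.choose j := by
  rw [← Nat.sum_range_choose]
  exact Finset.sum_le_sum fun j _ => Nat.choose_le_choose j h

theorem stmt14 (n s : ℕ) (h1 : (n : ℝ) / 3 < (s : ℝ)) (h2 : (s : ℝ) ≤ (n : ℝ) / 2)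
    (t : ℕ) (ht1 : n - s ≤ t) (ht2 : t ≤ n) :
    2 ^ s + ∑ j ∈ Finset.range (s + 1), (n - s).choose j
      ≤ 2 ^ (n - t) + ∑ j ∈ Finset.range (s + 1), t.choose j := by
  have h2' : 2 * s ≤ n := by
    have : (2 * s : ℝ) ≤ n := by linarith
    exact_mod_cast this
  have h1' : n < 3 * s := by
    have : (n : ℝ) < 3 * s := by linarith
    exact_mod_cast this
  induction t, ht1 using Nat.le_induction with
  | base => rw [show n - (n - s) = s by omega]
  | succ t ht ih =>
    have ih := ih (by omega)
    rw [aux_pascal]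
    have e : n - t = (n - (t + 1)) + 1 := by omega
    rw [e, pow_succ] at ih
    have a := aux_lower t (s - 1) (by omega)
    rw [show s - 1 + 1 = s by omega] at a
    have b : 2 ^ (n - (t + 1)) ≤ 2 ^ (s - 1) := Nat.pow_le_pow_right (by norm_num) (by omega)
    omega
end
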